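/- There exists a constant c > 0 such that for infinitely many natural numbers n there is a simple (non-weak) pseudoline arrangement (L₁, …, Lₙ) in ℝ² with the following property: for every homeomorphism h : ℝ² → ℝ² such that each set Cᵢ := h(Lᵢ) is a finite union of line segments and closed rays, the total number of bend points summed over C₁, …, Cₙ is at least c·n². That is, there exist simple arrangements of n pseudolines whose every representation by polygonal chains has Ω(n²) bends in total. -/

import Mathlib

open Set

/-- The Euclidean plane. -/
abbrev Plane := EuclideanSpace ℝ (Fin 2)

/-- A straight line in the plane. -/
def IsLine (S : Set Plane) : Prop :=
  ∃ a u : Plane, u ≠ 0 ∧ S = {p | ∃ t : ℝ, p = a + t • u}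

/-- A pseudoline: image of a straight line under a self-homeomorphism of the plane. -/
def IsPseudoline (L : Set Plane) : Prop :=
  ∃ (h : Plane ≃ₜ Plane) (ℓ : Set Plane), IsLine ℓ ∧ L = h '' ℓ

/-- Two curves cross at `p`: `p` lies on both, and each of them meets every
connected component of the complement of the other. -/
def CrossAt (L M : Set Plane) (p : Plane) : Prop :=
  p ∈ L ∩ M ∧
  (∀ x ∈ Mᶜ, (L ∩ connectedComponentIn Mᶜ x).Nonempty) ∧
  (∀ x ∈ Lᶜ, (M ∩ connectedComponentIn Lᶜ x).Nonempty)

/-- A weak pseudoline arrangement: pairwise distinct pseudolines, any two of which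
intersect in at most one point, and cross wherever they intersect. -/
def IsWeakArrangement {n : ℕ} (L : Fin n → Set Plane) : Prop :=
  Function.Injective L ∧
  (∀ i, IsPseudoline (L i)) ∧
  (∀ i j, i ≠ j → (L i ∩ L j).Subsingleton) ∧
  (∀ i j, i ≠ j → ∀ p ∈ L i ∩ L j, CrossAt (L i) (L j) p)

/-- A (non-weak) pseudoline arrangement: a weak arrangement in which any two
pseudolines intersect (in exactly one point, where they cross). -/
def IsArrangement {n : ℕ} (L : Fin n → Set Plane) : Prop :=
  IsWeakArrangement L ∧ ∀ i j, i ≠ j → (L i ∩ L j).Nonempty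

/-- Simplicity: no point lies on three distinct pseudolines of the family. -/
def IsSimple {n : ℕ} (L : Fin n → Set Plane) : Prop :=
  ∀ (p : Plane) (i j k : Fin n),
    p ∈ L i → p ∈ L j → p ∈ L k → i = j ∨ i = k ∨ j = k

/-- Outerplanarity: every intersection point of two pseudolines of the family lies
in the closure of some unbounded connected component of the complement of the union. -/
def IsOuterplanar {n : ℕ} (L : Fin n → Set Plane) : Prop :=
  ∀ i j, i ≠ j → ∀ p ∈ L i ∩ L j,
    ∃ x ∈ (⋃ k, L k)ᶜ,
      ¬ Bornology.IsBounded (connectedComponentIn (⋃ k, L k)ᶜ x) ∧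
      p ∈ closure (connectedComponentIn (⋃ k, L k)ᶜ x)

/-- A closed ray in the plane. -/
def IsRay (R : Set Plane) : Prop :=
  ∃ a u : Plane, u ≠ 0 ∧ R = {p | ∃ t : ℝ, 0 ≤ t ∧ p = a + t • u}

/-- A closed line segment in the plane. -/
def IsSegment (S : Set Plane) : Prop :=
  ∃ a b : Plane, S = segment ℝ a b

/-- A polygonal curve: a finite union of line segments and closed rays. -/
def IsPolygonal (C : Set Plane) : Prop :=
  ∃ 𝒮 : Finset (Set Plane), (∀ s ∈ 𝒮, IsSegment s ∨ IsRay s) ∧ C = ⋃ s ∈ 𝒮, s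

/-- A bend point of a set `C`: a point of `C` no neighborhood of which meets `C`
in a subset of a straight line. -/
def IsBendPoint (C : Set Plane) (p : Plane) : Prop :=
  p ∈ C ∧ ∀ U ∈ nhds p, ¬ ∃ ℓ : Set Plane, IsLine ℓ ∧ C ∩ U ⊆ ℓ

/-!
Consider eight curves, two of them serving as axes and the other six coming in three pairs, and
suppose all eight are straight. The curves of a pair cut segments off the axes, and the side on
which these two meet fixes the order of the two cross products of the segment lengths; the order in
which the axes are crossed gives further inequalities between such products. For a suitable order of
the crossings along the curves these inequalities form a cycle, as in Pappus-type non-stretchability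
arguments. The crossing order is preserved by homeomorphisms of the plane, so in every polygonal
representation such a configuration contains a bend point.

Eight families of `O(N)` nearly parallel periodic curves contain `N²` copies of this configuration
such that no two of them share a piece of curve. Thus `O(N)` pseudolines need at least `N²` bends.
-/

open Filter Topology

/-! ### Arrangements of graphs -/

/-- The graph of a real function, as a subset of the Euclidean plane. -/
def planeGraph (f : ℝ → ℝ) : Set Plane := {p | p 1 = f (p 0)}

@[simp]
lemma mem_planeGraph {f : ℝ → ℝ} {p : Plane} : p ∈ planeGraph f ↔ p 1 = f (p 0) := Iff.rfl

lemma plane_eta (p : Plane) : !₂[p 0, p 1] = p := by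
  ext i; fin_cases i <;> rfl

/-- The vertical shear that carries the horizontal axis to the graph of `f`. -/
noncomputable def verticalShear (f : ℝ → ℝ) (hf : Continuous f) : Plane ≃ₜ Plane where
  toFun p := !₂[p 0, p 1 + f (p 0)]
  invFun p := !₂[p 0, p 1 - f (p 0)]
  left_inv p := by simp [plane_eta]
  right_inv p := by simp [plane_eta]
  continuous_toFun := by fun_prop
  continuous_invFun := by fun_prop

lemma verticalShear_image_setOf {f : ℝ → ℝ} (hf : Continuous f) (s : Set ℝ) :
    verticalShear f hf '' {p | p 1 ∈ s} = {p | p 1 - f (p 0) ∈ s} := by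
  rw [(verticalShear f hf).image_eq_preimage_symm]
  rfl

lemma isLine_horizontalAxis : IsLine {p | p 1 ∈ ({0} : Set ℝ)} := by
  refine ⟨0, !₂[1, 0], fun h => by simpa using congr($h 0), ?_⟩
  ext p
  constructor
  · intro hp
    refine ⟨p 0, ?_⟩
    ext i; fin_cases i <;> simp_all
  · rintro ⟨t, rfl⟩
    simp

lemma isPseudoline_planeGraph {f : ℝ → ℝ} (hf : Continuous f) : IsPseudoline (planeGraph f) := by
  refine ⟨verticalShear f hf, _, isLine_horizontalAxis, ?_⟩
  rw [verticalShear_image_setOf]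
  ext p
  simp [sub_eq_zero]

lemma isPreconnected_setOf_sub_mem {f : ℝ → ℝ} (hf : Continuous f) {s : Set ℝ}
    (hs : Convex ℝ s) : IsPreconnected {p : Plane | p 1 - f (p 0) ∈ s} := by
  rw [← verticalShear_image_setOf hf]
  exact (hs.linear_preimage
    (EuclideanSpace.proj (𝕜 := ℝ) (1 : Fin 2)).toLinearMap).isPreconnected.image
    _ (verticalShear f hf).continuous.continuousOn

lemma planeGraph_inter_connectedComponentIn_nonempty {f g : ℝ → ℝ} (hg : Continuous g)
    (hlt : ∃ x, f x < g x) (hgt : ∃ x, g x < f x) {p : Plane} (hp : p ∈ (planeGraph g)ᶜ) :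
    (planeGraph f ∩ connectedComponentIn (planeGraph g)ᶜ p).Nonempty := by
  have meets {s : Set ℝ} (hs : Convex ℝ s) (h0 : (0 : ℝ) ∉ s) (hps : p 1 - g (p 0) ∈ s)
      (hfs : ∃ x, f x - g x ∈ s) :
      (planeGraph f ∩ connectedComponentIn (planeGraph g)ᶜ p).Nonempty := by
    obtain ⟨x, hx⟩ := hfs
    have side_subset : {q : Plane | q 1 - g (q 0) ∈ s} ⊆ (planeGraph g)ᶜ := by
      intro q hq hqg
      exact h0 (by simpa [mem_planeGraph.1 hqg] using hq)
    exact ⟨!₂[x, f x], by simp, (isPreconnected_setOf_sub_mem hg hs).subset_connectedComponentIn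
      hps side_subset (by simpa using hx)⟩
  rcases lt_or_gt_of_ne (show p 1 ≠ g (p 0) from hp) with below | above
  · exact meets (convex_Iio 0) self_notMem_Iio (by simpa using below) (by simpa using hlt)
  · exact meets (convex_Ioi 0) self_notMem_Ioi (by simpa using above) (by simpa using hgt)

/-- A family of continuous functions is transverse if the difference of any two of them is a
bijection of `ℝ`. Their graphs then cross pairwise exactly once, in a way that is stable under
adding constants to the functions. -/
structure Transverse {ι : Type*} (f : ι → ℝ → ℝ) : Prop where
  continuous (i : ι) : Continuous (f i)
  bijective_sub {i j : ι} (hij : i ≠ j) : Function.Bijective (f i - f j)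

namespace Transverse

variable {ι : Type*} {f : ι → ℝ → ℝ}

lemma comp_injective {κ : Type*} (hf : Transverse f) {e : κ → ι} (he : Function.Injective e) :
    Transverse fun a => f (e a) where
  continuous a := hf.continuous (e a)
  bijective_sub hab := hf.bijective_sub (he.ne hab)

lemma add_const (hf : Transverse f) (k : ι → ℝ) : Transverse fun i x => f i x + k i where
  continuous i := (hf.continuous i).add_const (k i)
  bijective_sub {i j} hij := by
    convert (Equiv.addRight (k i - k j)).bijective.comp (hf.bijective_sub hij) using 1
    ext x
    simp
    ring

lemma eq_of_meet (hf : Transverse f) {i j : ι} (hij : i ≠ j) {x y : ℝ} (hx : f i x = f j x)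
    (hy : f i y = f j y) : x = y :=
  (hf.bijective_sub hij).injective (by simp [hx, hy])

lemma exists_meet (hf : Transverse f) {i j : ι} (hij : i ≠ j) : ∃ x, f i x = f j x := by
  obtain ⟨x, hx⟩ := (hf.bijective_sub hij).surjective 0
  exact ⟨x, sub_eq_zero.1 hx⟩

lemma exists_lt (hf : Transverse f) {i j : ι} (hij : i ≠ j) : ∃ x, f i x < f j x := by
  obtain ⟨x, hx⟩ := (hf.bijective_sub hij).surjective (-1)
  exact ⟨x, by rw [Pi.sub_apply] at hx; linarith⟩

lemma isArrangement {n : ℕ} {f : Fin n → ℝ → ℝ} (hf : Transverse f) :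
    IsArrangement fun i => planeGraph (f i) := by
  have meets {i j : Fin n} (hij : i ≠ j) (p : Plane) (hp : p ∈ (planeGraph (f j))ᶜ) :
      (planeGraph (f i) ∩ connectedComponentIn (planeGraph (f j))ᶜ p).Nonempty :=
    planeGraph_inter_connectedComponentIn_nonempty (hf.continuous j) (hf.exists_lt hij)
      (hf.exists_lt hij.symm) hp
  refine ⟨⟨fun i j heq => ?_, fun i => isPseudoline_planeGraph (hf.continuous i), ?_, ?_⟩, ?_⟩
  · by_contra hij
    obtain ⟨x, hx⟩ := hf.exists_lt hij
    exact hx.ne (by simpa using heq.le (show !₂[x, f i x] ∈ planeGraph (f i) by simp))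
  · rintro i j hij p ⟨hpi, hpj⟩ q ⟨hqi, hqj⟩
    have heq : p 0 = q 0 := hf.eq_of_meet hij (hpi.symm.trans hpj) (hqi.symm.trans hqj)
    rw [← plane_eta p, ← plane_eta q, hpi, hqi, heq]
  · exact fun i j hij p hp => ⟨hp, meets hij, meets hij.symm⟩
  · intro i j hij
    obtain ⟨x, hx⟩ := hf.exists_meet hij
    exact ⟨!₂[x, f i x], by simp, by simp [hx]⟩

/-- Offsets are chosen one at a time: the new curve only has to miss the finitely many crossings
of the previous ones. -/
lemma exists_offsets_card_le_two (hf : Transverse f) {ρ : ℝ} (hρ : 0 < ρ) (s : Finset ι) :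
    ∃ k : ι → ℝ, (∀ i, |k i| < ρ) ∧ ∀ x y, {i ∈ s | f i x + k i = y}.card ≤ 2 := by
  classical
  induction s using Finset.induction_on with
  | empty => exact ⟨0, by simp [hρ], by simp⟩
  | insert a s ha ih =>
    obtain ⟨k, hk, hs⟩ := ih
    set crossingOffsets : Set ℝ := ⋃ i ∈ s, ⋃ j ∈ s, ⋃ _ : i ≠ j,
      (fun x => f i x + k i - f a x) '' {x | f i x + k i = f j x + k j} with h_offsets
    have hfin : crossingOffsets.Finite :=
      s.finite_toSet.biUnion fun i _ => s.finite_toSet.biUnion fun j _ => finite_iUnion fun hij =>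
        (Set.Subsingleton.finite fun _ hx _ hy => (hf.add_const k).eq_of_meet hij hx hy).image _
    obtain ⟨c, hc, hc_miss⟩ := ((Ioo_infinite (neg_lt_self hρ)).sdiff hfin).nonempty
    refine ⟨Function.update k a c, fun i => ?_, fun x y => ?_⟩
    · rcases eq_or_ne i a with rfl | hi
      · simpa [abs_lt] using hc
      · simpa [hi] using hk i
    have h_old : {i ∈ s | f i x + Function.update k a c i = y} = {i ∈ s | f i x + k i = y} :=
      Finset.filter_congr fun i hi => by
        rw [Function.update_of_ne (ne_of_mem_of_not_mem hi ha)]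
    rw [Finset.filter_insert, h_old, Function.update_self]
    split_ifs with hay
    · refine (Finset.card_insert_le _ _).trans (Nat.succ_le_succ (Finset.card_le_one.2 ?_))
      intro i hi j hj
      rw [Finset.mem_filter] at hi hj
      by_contra hij
      refine hc_miss ?_
      simp only [h_offsets, mem_iUnion]
      exact ⟨i, hi.1, j, hj.1, hij, x, hi.2.trans hj.2.symm, by grind⟩
    · exact hs x y

end Transverse

lemma isSimple_planeGraph_of_card_le_two {n : ℕ} {f : Fin n → ℝ → ℝ}
    (hf : ∀ x y, (Finset.univ.filter fun i => f i x = y).card ≤ 2) :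
    IsSimple fun i => planeGraph (f i) := by
  intro p i j k hi hj hk
  by_contra! h
  refine (hf (p 0) (p 1)).not_gt (Finset.two_lt_card.2 ⟨i, ?_, j, ?_, k, ?_, h⟩)
  exacts [by simpa using hi.symm, by simpa using hj.symm, by simpa using hk.symm]

/-! ### Bijectivity of Lipschitz perturbations -/

lemma bijective_of_mul_sub_le {g : ℝ → ℝ} (hg : Continuous g) {c : ℝ} (hc : 0 < c)
    (hexp : ∀ ⦃x y⦄, x ≤ y → c * (y - x) ≤ g y - g x) : Function.Bijective g := by
  have hmono : StrictMono g := fun x y hxy => by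
    linarith [hexp hxy.le, mul_pos hc (sub_pos.2 hxy)]
  refine ⟨hmono.injective, hg.surjective ?_ ?_⟩
  · refine tendsto_atTop_mono' _ ?_
      (tendsto_atTop_add_const_left _ (g 0) (tendsto_id.const_mul_atTop hc))
    filter_upwards [eventually_ge_atTop 0] with x hx
    have := hexp hx
    simp only [id]; linarith
  · refine tendsto_atBot_mono' _ ?_
      (tendsto_atBot_add_const_left _ (g 0) (tendsto_id.const_mul_atBot hc))
    filter_upwards [eventually_le_atBot 0] with x hx
    have := hexp hx
    simp only [id]; linarith

lemma bijective_mul_add_of_lipschitzWith {φ : ℝ → ℝ} {K : NNReal} (hφ : LipschitzWith K φ) {m : ℝ}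
    (hm : K < |m|) : Function.Bijective fun x => m * x + φ x := by
  have hdist : ∀ x y, x ≤ y → |φ y - φ x| ≤ K * (y - x) := fun x y hxy => by
    simpa [Real.norm_eq_abs, abs_of_nonneg (sub_nonneg.2 hxy)] using hφ.norm_sub_le y x
  have hcont : Continuous fun x => m * x + φ x := (continuous_const_mul m).add hφ.continuous
  rcases lt_abs.1 hm with hm | hm
  · refine bijective_of_mul_sub_le hcont (sub_pos.2 hm) fun x y hxy => ?_
    linarith [neg_le_of_abs_le (hdist x y hxy)]
  · have hneg : Function.Bijective fun x => -(m * x + φ x) :=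
      bijective_of_mul_sub_le hcont.neg (sub_pos.2 hm) fun x y hxy => by
        linarith [le_of_abs_le (hdist x y hxy)]
    simpa [Function.comp_def] using (Equiv.neg ℝ).bijective.comp hneg

lemma transverse_mul_add_mul {ι : Type*} {z : ℝ → ℝ} (hz : LipschitzWith 1 z) {m e : ι → ℝ}
    (hsep : Pairwise fun i j => |e i - e j| < |m i - m j|) :
    Transverse fun i x => m i * x + e i * z x where
  continuous i := by have := hz.continuous; fun_prop
  bijective_sub {i j} hij := by
    have hlip : LipschitzWith (‖e i - e j‖₊ * 1) fun x => (e i - e j) * z x :=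
      (lipschitzWith_smul (e i - e j)).comp hz
    convert bijective_mul_add_of_lipschitzWith hlip (m := m i - m j) (by simpa using hsep hij)
      using 1
    ext x
    simp only [Pi.sub_apply]
    ring

/-! ### Polygonal curves and straight pieces -/

lemma IsLine.eq_range_lineMap {ℓ : Set Plane} (hℓ : IsLine ℓ) {p q : Plane} (hpq : p ≠ q)
    (hp : p ∈ ℓ) (hq : q ∈ ℓ) : ℓ = range (AffineMap.lineMap (k := ℝ) p q) := by
  obtain ⟨a, u, -, rfl⟩ := hℓ
  obtain ⟨s, rfl⟩ := hp
  obtain ⟨t, rfl⟩ := hq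
  have hts : t - s ≠ 0 := sub_ne_zero.2 fun h => hpq (by rw [h])
  have hmap : ∀ r : ℝ, AffineMap.lineMap (a + s • u) (a + t • u) r = a + (s + r * (t - s)) • u :=
    fun r => by rw [AffineMap.lineMap_apply_module']; module
  ext z
  simp only [mem_ofPred_eq, mem_range, hmap]
  constructor
  · rintro ⟨r, rfl⟩
    exact ⟨(r - s) / (t - s), by rw [div_mul_cancel₀ _ hts, add_sub_cancel]⟩
  · rintro ⟨r, rfl⟩
    exact ⟨_, rfl⟩

lemma IsLine.eq_of_mem {ℓ m : Set Plane} (hℓ : IsLine ℓ) (hm : IsLine m) {p q : Plane}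
    (hpq : p ≠ q) (hpℓ : p ∈ ℓ) (hqℓ : q ∈ ℓ) (hpm : p ∈ m) (hqm : q ∈ m) : ℓ = m :=
  (hℓ.eq_range_lineMap hpq hpℓ hqℓ).trans (hm.eq_range_lineMap hpq hpm hqm).symm

lemma exists_isLine_mem_mem (a b : Plane) : ∃ ℓ, IsLine ℓ ∧ a ∈ ℓ ∧ b ∈ ℓ := by
  obtain ⟨u, hu, t, rfl⟩ : ∃ u : Plane, u ≠ 0 ∧ ∃ t : ℝ, b = a + t • u := by
    rcases eq_or_ne b a with rfl | hab
    · obtain ⟨u, hu⟩ := exists_ne (0 : Plane)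
      exact ⟨u, hu, 0, by simp⟩
    · exact ⟨b - a, sub_ne_zero.2 hab, 1, by simp⟩
  exact ⟨_, ⟨a, u, hu, rfl⟩, ⟨0, by simp⟩, ⟨t, rfl⟩⟩

lemma IsLine.convex {ℓ : Set Plane} (hℓ : IsLine ℓ) : Convex ℝ ℓ := by
  obtain ⟨a, u, -, rfl⟩ := hℓ
  rintro _ ⟨s, rfl⟩ _ ⟨t, rfl⟩ x y - - hxy
  obtain rfl : y = 1 - x := by linarith
  exact ⟨x * s + (1 - x) * t, by module⟩

lemma IsSegment.isClosed {s : Set Plane} (hs : IsSegment s) : IsClosed s := by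
  obtain ⟨a, b, rfl⟩ := hs
  rw [segment_eq_image_lineMap]
  exact (isCompact_Icc.image AffineMap.lineMap_continuous).isClosed

lemma IsSegment.exists_isLine_superset {s : Set Plane} (hs : IsSegment s) :
    ∃ ℓ, IsLine ℓ ∧ s ⊆ ℓ := by
  obtain ⟨a, b, rfl⟩ := hs
  obtain ⟨ℓ, hℓ, ha, hb⟩ := exists_isLine_mem_mem a b
  exact ⟨ℓ, hℓ, hℓ.convex.segment_subset ha hb⟩

lemma IsRay.isClosed {r : Set Plane} (hr : IsRay r) : IsClosed r := by
  obtain ⟨a, u, hu, rfl⟩ := hr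
  have himage : {p | ∃ t : ℝ, 0 ≤ t ∧ p = a + t • u} = (fun t : ℝ => a + t • u) '' Ici 0 := by
    ext p
    simp [eq_comm]
  rw [himage]
  exact ((Homeomorph.addLeft a).isClosedEmbedding.comp
    (isClosedEmbedding_smul_left hu)).isClosedMap _ isClosed_Ici

lemma IsRay.exists_isLine_superset {r : Set Plane} (hr : IsRay r) : ∃ ℓ, IsLine ℓ ∧ r ⊆ ℓ := by
  obtain ⟨a, u, hu, rfl⟩ := hr
  exact ⟨_, ⟨a, u, hu, rfl⟩, fun _ ⟨t, _, hp⟩ => ⟨t, hp⟩⟩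

/-- Away from the finitely many intersections of distinct carrier lines, all pieces through a
point share one carrier. -/
lemma finite_setOf_isBendPoint_iUnion {ι : Type*} [Finite ι] {s ℓ : ι → Set Plane}
    (hs : ∀ i, IsClosed (s i)) (hℓ : ∀ i, IsLine (ℓ i)) (hsℓ : ∀ i, s i ⊆ ℓ i) :
    {p | IsBendPoint (⋃ i, s i) p}.Finite := by
  have hfin : (⋃ i, ⋃ j, ⋃ _ : ℓ i ≠ ℓ j, ℓ i ∩ ℓ j).Finite := by
    refine finite_iUnion fun i => finite_iUnion fun j => finite_iUnion fun hij =>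
      Set.Subsingleton.finite ?_
    rintro p ⟨hpi, hpj⟩ q ⟨hqi, hqj⟩
    by_contra hpq
    exact hij ((hℓ i).eq_of_mem (hℓ j) hpq hpi hqi hpj hqj)
  refine hfin.subset fun p ⟨hp, hbend⟩ => ?_
  obtain ⟨i, hpi⟩ := mem_iUnion.1 hp
  by_contra hmiss
  simp only [mem_iUnion, not_exists] at hmiss
  have hnear : ∀ᶠ z in 𝓝 p, ∀ j, z ∈ s j → p ∈ s j := by
    refine eventually_all.2 fun j => ?_
    by_cases hpj : p ∈ s j
    · exact Eventually.of_forall fun _ _ => hpj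
    · filter_upwards [(hs j).isOpen_compl.mem_nhds hpj] with z hz hzj using absurd hzj hz
  refine hbend _ hnear ⟨ℓ i, hℓ i, fun z ⟨hz, hzp⟩ => ?_⟩
  obtain ⟨j, hzj⟩ := mem_iUnion.1 hz
  have hsame : ℓ i = ℓ j := by
    by_contra hij
    exact hmiss i j hij ⟨hsℓ i hpi, hsℓ j (hzp j hzj)⟩
  exact hsame ▸ hsℓ j hzj

lemma IsPolygonal.finite_setOf_isBendPoint {C : Set Plane} (hC : IsPolygonal C) :
    {p | IsBendPoint C p}.Finite := by
  obtain ⟨𝒮, h𝒮, rfl⟩ := hC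
  have hclosed (s : 𝒮) : IsClosed s.1 :=
    (h𝒮 s s.2).elim IsSegment.isClosed IsRay.isClosed
  choose ℓ hℓ hsub using fun s : 𝒮 =>
    (h𝒮 s s.2).elim IsSegment.exists_isLine_superset IsRay.exists_isLine_superset
  rw [← iUnion_subtype (· ∈ 𝒮) fun s => s.1]
  exact finite_setOf_isBendPoint_iUnion hclosed hℓ hsub

/-- The curve `γ` traverses a straight line monotonically over `I`; `τ` is its position along the
line `p + ℝ u`. -/
def IsStraightOn (γ : ℝ → Plane) (I : Set ℝ) : Prop :=
  ∃ (p u : Plane) (τ : ℝ → ℝ), u ≠ 0 ∧ ContinuousOn τ I ∧ StrictMonoOn τ I ∧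
    ∀ x ∈ I, γ x = p + τ x • u

lemma exists_isLine_mapsTo_of_not_isBendPoint {C : Set Plane} {γ : ℝ → Plane} (hγ : Continuous γ)
    (hinj : Function.Injective γ) (hC : ∀ x, γ x ∈ C) {I : Set ℝ} (hI : IsPreconnected I)
    (hne : I.Nonempty) (hbend : ∀ x ∈ I, ¬ IsBendPoint C (γ x)) :
    ∃ ℓ, IsLine ℓ ∧ MapsTo γ I ℓ := by
  have hlocal : ∀ x ∈ I, ∃ ℓ, IsLine ℓ ∧ ∀ᶠ y in 𝓝 x, γ y ∈ ℓ := by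
    intro x hx
    obtain ⟨U, hU, ℓ, hℓ, hsub⟩ : ∃ U ∈ 𝓝 (γ x), ∃ ℓ, IsLine ℓ ∧ C ∩ U ⊆ ℓ := by
      simpa [IsBendPoint, hC x] using hbend x hx
    exact ⟨ℓ, hℓ, (hγ.continuousAt.eventually_mem hU).mono fun y hy => hsub ⟨hC y, hy⟩⟩
  obtain ⟨x₀, hx₀⟩ := hne
  obtain ⟨ℓ, hℓ, hℓ₀⟩ := hlocal x₀ hx₀
  have hsub := hI.subset_of_closure_inter_subset isOpen_setOfPred_eventually_nhds ⟨x₀, hx₀, hℓ₀⟩ ?_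
  · exact ⟨ℓ, hℓ, fun x hx => (hsub hx).self_of_nhds⟩
  rintro x ⟨hx_closure, hx⟩
  obtain ⟨m, hm, hmx⟩ := hlocal x hx
  obtain ⟨x', hmx', hℓx'⟩ :=
    mem_closure_iff_nhds.1 hx_closure _ (eventually_eventually_nhds.2 hmx)
  have hboth : ∀ᶠ y in 𝓝 x', γ y ∈ ℓ ∧ γ y ∈ m := hℓx'.and hmx'
  obtain ⟨y, ⟨hyℓ, hym⟩, hyx'⟩ :=
    ((hboth.filter_mono nhdsWithin_le_nhds).and (self_mem_nhdsWithin (s := {x'}ᶜ))).exists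
  have hsame := hℓ.eq_of_mem hm (hinj.ne hyx') hyℓ hboth.self_of_nhds.1 hym hboth.self_of_nhds.2
  exact hsame ▸ hmx

lemma isStraightOn_Ioo_of_mapsTo {γ : ℝ → Plane} (hγ : Continuous γ)
    (hinj : Function.Injective γ) {a b : ℝ} (hab : a < b) {ℓ : Set Plane} (hℓ : IsLine ℓ)
    (hmaps : MapsTo γ (Ioo a b) ℓ) : IsStraightOn γ (Ioo a b) := by
  obtain ⟨p, u, hu, rfl⟩ := hℓ
  obtain ⟨i, hi⟩ : ∃ i, u i ≠ 0 := by
    by_contra! h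
    exact hu (PiLp.ext h)
  let τ : ℝ → ℝ := fun x => (γ x i - p i) / u i
  have hτ : ∀ x ∈ Ioo a b, γ x = p + τ x • u := by
    intro x hx
    obtain ⟨t, ht⟩ := hmaps hx
    have hτx : τ x = t := by simp [τ, ht, hi]
    rw [hτx, ht]
  have hτ_cont : ContinuousOn τ (Ioo a b) :=
    ((((PiLp.continuous_apply 2 _ i).comp hγ).sub continuous_const).div_const _).continuousOn
  have hτ_inj : InjOn τ (Ioo a b) := fun x hx y hy hxy => hinj (by rw [hτ x hx, hτ y hy, hxy])
  rcases hτ_cont.strictMonoOn_of_injOn_Ioo hab hτ_inj with hmono | hanti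
  · exact ⟨p, u, τ, hu, hτ_cont, hmono, hτ⟩
  · exact ⟨p, -u, -τ, neg_ne_zero.2 hu, hτ_cont.neg, hanti.neg, fun x hx => by simp [hτ x hx]⟩

lemma IsStraightOn.exists_eq_add_smul {γ : ℝ → Plane} {I : Set ℝ} (hγ : IsStraightOn γ I) {o : ℝ}
    (ho : o ∈ I) : ∃ (u : Plane) (τ : ℝ → ℝ), u ≠ 0 ∧ ContinuousOn τ I ∧ StrictMonoOn τ I ∧
      τ o = 0 ∧ ∀ x ∈ I, γ x = γ o + τ x • u := by
  obtain ⟨p, u, τ, hu, hτ_cont, hτ_mono, hτ⟩ := hγ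
  refine ⟨u, fun x => τ x - τ o, hu, hτ_cont.sub continuousOn_const,
    fun x hx y hy hxy => sub_lt_sub_right (hτ_mono hx hy hxy) _, sub_self _, fun x hx => ?_⟩
  rw [hτ x hx, hτ o ho]
  module

lemma IsStraightOn.sbtw {γ : ℝ → Plane} {I : Set ℝ} (hγ : IsStraightOn γ I) {x y z : ℝ}
    (hx : x ∈ I) (hy : y ∈ I) (hz : z ∈ I) (hxy : x < y) (hyz : y < z) :
    Sbtw ℝ (γ x) (γ y) (γ z) := by
  obtain ⟨p, u, τ, hu, -, hτ_mono, hτ⟩ := hγ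
  have hτ_sbtw : Sbtw ℝ (τ x) (τ y) (τ z) :=
    .of_lt_of_lt (hτ_mono hx hy hxy) (hτ_mono hy hz hyz)
  have hinj : Function.Injective (AffineMap.lineMap (k := ℝ) p (p + u)) :=
    AffineMap.lineMap_injective ℝ (by simpa using hu)
  convert hinj.sbtw_map_iff.2 hτ_sbtw using 1 <;>
    simp [hτ _ hx, hτ _ hy, hτ _ hz, AffineMap.lineMap_apply, add_comm]

lemma image_mem_nhds_of_strictMonoOn {τ : ℝ → ℝ} {I : Set ℝ} {o : ℝ} (hI : I ∈ 𝓝 o)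
    (hcont : ContinuousOn τ I) (hmono : StrictMonoOn τ I) : τ '' I ∈ 𝓝 (τ o) := by
  obtain ⟨ε, hε, hsub⟩ := (nhds_basis_Icc_pos o).mem_iff.1 hI
  have hlo : o - ε < o := by linarith
  have hhi : o < o + ε := by linarith
  have hmem {x : ℝ} (h₁ : o - ε ≤ x) (h₂ : x ≤ o + ε) : x ∈ I := hsub ⟨h₁, h₂⟩
  refine mem_of_superset (Icc_mem_nhds
    (hmono (hmem le_rfl (hlo.trans hhi).le) (hmem hlo.le hhi.le) hlo)
    (hmono (hmem hlo.le hhi.le) (hmem (hlo.trans hhi).le le_rfl) hhi)) ?_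
  exact (intermediate_value_Icc (hlo.trans hhi).le (hcont.mono hsub)).trans (image_mono hsub)

lemma IsStraightOn.exists_oblique_coordinates {γ δ : ℝ → Plane} {I : Set ℝ} {o : ℝ}
    (hγ : IsStraightOn γ I) (hδ : IsStraightOn δ I) (hI : I ∈ 𝓝 o) (ho : γ o = δ o)
    (honce : ∀ x y, γ x = δ y → x = o) :
    ∃ (u v : Plane) (α β : ℝ → ℝ), LinearIndependent ℝ ![u, v] ∧
      StrictMonoOn α I ∧ α o = 0 ∧ (∀ x ∈ I, γ x = γ o + α x • u) ∧
      StrictMonoOn β I ∧ β o = 0 ∧ ∀ x ∈ I, δ x = γ o + β x • v := by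
  obtain ⟨u, α, hu, hα_cont, hα_mono, hα₀, hγu⟩ := hγ.exists_eq_add_smul (mem_of_mem_nhds hI)
  obtain ⟨v, β, hv, hβ_cont, hβ_mono, hβ₀, hδv⟩ := hδ.exists_eq_add_smul (mem_of_mem_nhds hI)
  rw [← ho] at hδv
  refine ⟨u, v, α, β, ?_, hα_mono, hα₀, hγu, hβ_mono, hβ₀, hδv⟩
  refine (LinearIndependent.pair_iff' hu).2 fun c hc => ?_
  have hc0 : c ≠ 0 := by
    rintro rfl
    exact hv (by simpa using hc.symm)
  have hγ_covers : α '' I ∈ 𝓝 0 := hα₀ ▸ image_mem_nhds_of_strictMonoOn hI hα_cont hα_mono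
  have hδ_covers : ∀ᶠ t in 𝓝 0, t / c ∈ β '' I := by
    have hdiv : Tendsto (· / c) (𝓝 0) (𝓝 (β o)) :=
      (continuous_id.div_const c).tendsto' 0 (β o) (by simp [hβ₀])
    exact hdiv (image_mem_nhds_of_strictMonoOn hI hβ_cont hβ_mono)
  obtain ⟨_, ⟨⟨x, hx, rfl⟩, y, hy, hyx⟩, hx0⟩ :=
    (((eventually_mem_set.2 hγ_covers).and hδ_covers).filter_mono nhdsWithin_le_nhds |>.and
      (self_mem_nhdsWithin (s := {0}ᶜ))).exists
  have hmeet : γ x = δ y := by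
    rw [hγu x hx, hδv y hy, hyx, ← hc, smul_smul, div_mul_cancel₀ _ hc0]
  exact hx0 (by rw [honce x y hmeet, hα₀]; rfl)

/-- In the coordinates `O + α u + β v`, if the lines through `(α₁, 0), (0, β₁)` and through
`(α₂, 0), (0, β₂)` meet beyond the second axis, then the one starting closer to `O` is steeper. -/
lemma mul_lt_mul_of_sbtw_of_sbtw {V : Type*} [AddCommGroup V] [Module ℝ V] {u v O X : V}
    (hind : LinearIndependent ℝ ![u, v]) {α₁ α₂ β₁ β₂ : ℝ} (hα : α₁ < α₂) (hβ : 0 < β₁)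
    (h₁ : Sbtw ℝ (O + α₁ • u) (O + β₁ • v) X) (h₂ : Sbtw ℝ (O + α₂ • u) (O + β₂ • v) X) :
    α₁ * β₂ < α₂ * β₁ := by
  obtain ⟨⟨r, ⟨hr, hr1⟩, hX₁⟩, -⟩ := sbtw_iff_mem_image_Ioo_and_ne.1 h₁
  obtain ⟨⟨s, ⟨hs, hs1⟩, hX₂⟩, -⟩ := sbtw_iff_mem_image_Ioo_and_ne.1 h₂
  rw [AffineMap.lineMap_apply_module] at hX₁ hX₂
  obtain ⟨hu, hv⟩ := LinearIndependent.pair_iff.1 hind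
    (s * (1 - r) * α₁ - r * (1 - s) * α₂) (r * β₂ - s * β₁) (by
      linear_combination (norm := module) s • hX₁ - r • hX₂)
  have hsr : s * α₁ < r * α₂ := by nlinarith [mul_pos hr hs]
  refine lt_of_mul_lt_mul_left ?_ hr.le
  linear_combination β₁ * hsr + α₁ * hv

/-! ### A crossing order that straight lines cannot realise -/

/-- The `r`-th crossing, from left to right, of eight curves in the configuration that straight
lines cannot realise. In each pair the first curve lies below the second before the crossing.
Curves `0` and `7` serve as coordinate axes; the other six form the pairs `(1, 2)`, `(3, 4)` and
`(5, 6)`, whose own crossings are the last two and the first. -/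
def crossing : Fin 16 → Fin 8 × Fin 8 :=
  ![(5, 6), (0, 7), (0, 6), (0, 1), (0, 2), (0, 3), (7, 3), (7, 6),
    (0, 4), (0, 5), (7, 1), (7, 4), (7, 5), (7, 2), (1, 2), (3, 4)]

section StraightCrossings

variable {γ : Fin 8 → ℝ → Plane} {I : Set ℝ} {x : Fin 16 → ℝ}

lemma exists_crossing_coordinates (hγ₀ : IsStraightOn (γ 0) I) (hγ₇ : IsStraightOn (γ 7) I)
    (hx : StrictMono x) (hxI : ∀ r, I ∈ 𝓝 (x r))
    (hmeet : ∀ r, γ (crossing r).1 (x r) = γ (crossing r).2 (x r))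
    (honce : ∀ y z, γ 0 y = γ 7 z → y = x 1) :
    ∃ (u v O : Plane) (α β : Fin 16 → ℝ), LinearIndependent ℝ ![u, v] ∧
      StrictMono α ∧ α 1 = 0 ∧ (∀ r a, crossing r = (0, a) → γ a (x r) = O + α r • u) ∧
      StrictMono β ∧ β 1 = 0 ∧ ∀ r a, crossing r = (7, a) → γ a (x r) = O + β r • v := by
  obtain ⟨u, v, α, β, hind, hα_mono, hα₁, hα, hβ_mono, hβ₁, hβ⟩ :=
    hγ₀.exists_oblique_coordinates hγ₇ (hxI 1) (hmeet 1) honce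
  have hmem (r : Fin 16) : x r ∈ I := mem_of_mem_nhds (hxI r)
  refine ⟨u, v, γ 0 (x 1), α ∘ x, β ∘ x, hind,
    fun r s h => hα_mono (hmem r) (hmem s) (hx h), hα₁, fun r a h => ?_,
    fun r s h => hβ_mono (hmem r) (hmem s) (hx h), hβ₁, fun r a h => ?_⟩
  · simpa [h, hα _ (hmem r)] using (hmeet r).symm
  · simpa [h, hβ _ (hmem r)] using (hmeet r).symm

/-- With `α` and `β` the positions along the axes, the three pairs give
`α₃ β₁₃ < α₄ β₁₀`, `α₅ β₁₁ < α₈ β₆` and `α₉ β₇ < α₂ β₁₂`, while the crossing order gives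
`α₄ β₁₀ < α₅ β₁₁`, `α₈ β₆ < α₉ β₇` and `α₂ β₁₂ < α₃ β₁₃`: a cycle. -/
lemma not_straight_of_crossing_order (hγ : ∀ a, IsStraightOn (γ a) I) (hx : StrictMono x)
    (hxI : ∀ r, I ∈ 𝓝 (x r)) (hmeet : ∀ r, γ (crossing r).1 (x r) = γ (crossing r).2 (x r))
    (honce : ∀ y z, γ 0 y = γ 7 z → y = x 1) : False := by
  obtain ⟨u, v, O, α, β, hind, hα, hα₁, onα, hβ, hβ₁, onβ⟩ :=
    exists_crossing_coordinates (hγ 0) (hγ 7) hx hxI hmeet honce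
  have hα_pos {r : Fin 16} (h : 1 < r) : 0 < α r := hα₁ ▸ hα h
  have hβ_pos {r : Fin 16} (h : 1 < r) : 0 < β r := hβ₁ ▸ hβ h
  have hsbtw (a : Fin 8) {r s t : Fin 16} (hrs : r < s) (hst : s < t) :
      Sbtw ℝ (γ a (x r)) (γ a (x s)) (γ a (x t)) :=
    have hmem (r : Fin 16) : x r ∈ I := mem_of_mem_nhds (hxI r)
    (hγ a).sbtw (hmem r) (hmem s) (hmem t) (hx hrs) (hx hst)
  have pair₁ : α 3 * β 13 < α 4 * β 10 := by
    have h₁ := hsbtw 1 (show 3 < 10 by decide) (show 10 < 14 by decide)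
    have h₂ := hsbtw 2 (show 4 < 13 by decide) (show 13 < 14 by decide)
    rw [onα 3 1 rfl, onβ 10 1 rfl] at h₁
    rw [onα 4 2 rfl, onβ 13 2 rfl] at h₂
    exact mul_lt_mul_of_sbtw_of_sbtw hind (hα (by decide)) (hβ_pos (by decide)) h₁
      (hmeet 14 ▸ h₂)
  have pair₂ : α 5 * β 11 < α 8 * β 6 := by
    have h₁ := hsbtw 3 (show 5 < 6 by decide) (show 6 < 15 by decide)
    have h₂ := hsbtw 4 (show 8 < 11 by decide) (show 11 < 15 by decide)
    rw [onα 5 3 rfl, onβ 6 3 rfl] at h₁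
    rw [onα 8 4 rfl, onβ 11 4 rfl] at h₂
    exact mul_lt_mul_of_sbtw_of_sbtw hind (hα (by decide)) (hβ_pos (by decide)) h₁
      (hmeet 15 ▸ h₂)
  have pair₃ : β 7 * α 9 < β 12 * α 2 := by
    have h₁ := (hsbtw 6 (show 0 < 2 by decide) (show 2 < 7 by decide)).symm
    have h₂ := (hsbtw 5 (show 0 < 9 by decide) (show 9 < 12 by decide)).symm
    rw [onα 2 6 rfl, onβ 7 6 rfl] at h₁
    rw [onα 9 5 rfl, onβ 12 5 rfl] at h₂
    exact mul_lt_mul_of_sbtw_of_sbtw (LinearIndependent.pair_symm_iff.1 hind)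
      (hβ (by decide)) (hα_pos (by decide)) h₁ (hmeet 0 ▸ h₂)
  have order {i j k l : Fin 16} (hi : 1 < i) (hij : i < j) (hk : 1 < k) (hkl : k < l) :
      α i * β k < α j * β l :=
    mul_lt_mul'' (hα hij) (hβ hkl) (hα_pos hi).le (hβ_pos hk).le
  have order₁ : α 4 * β 10 < α 5 * β 11 := order (by decide) (by decide) (by decide) (by decide)
  have order₂ : α 8 * β 6 < α 9 * β 7 := order (by decide) (by decide) (by decide) (by decide)
  have order₃ : α 2 * β 12 < α 3 * β 13 := order (by decide) (by decide) (by decide) (by decide)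
  linarith

end StraightCrossings

/-! ### Configurations that force a bend -/

/-- The graphs of the family `f` force a bend over `I`: under every homeomorphism of the plane, one
of them is bent at the image of a point with abscissa in `I`. -/
def ForcesBendOn {κ : Type*} (f : κ → ℝ → ℝ) (I : Set ℝ) : Prop :=
  ∀ h : Plane ≃ₜ Plane, ∃ a, ∃ x ∈ I, IsBendPoint (h '' planeGraph (f a)) (h !₂[x, f a x])

lemma exists_strictMono_crossings {f : Fin 8 → ℝ → ℝ} (hf : ∀ a, Continuous (f a))
    {y : Fin 17 → ℝ} (hy : StrictMono y)
    (hlt : ∀ r : Fin 16, f (crossing r).1 (y r.castSucc) < f (crossing r).2 (y r.castSucc))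
    (hgt : ∀ r : Fin 16, f (crossing r).2 (y r.succ) < f (crossing r).1 (y r.succ)) :
    ∃ x : Fin 16 → ℝ, StrictMono x ∧ (∀ r, x r ∈ Ioo (y 0) (y 16)) ∧
      ∀ r, f (crossing r).1 (x r) = f (crossing r).2 (x r) := by
  have hroot (r : Fin 16) :
      ∃ x ∈ Ioo (y r.castSucc) (y r.succ), f (crossing r).1 x = f (crossing r).2 x := by
    obtain ⟨x, hx, hx0⟩ := intermediate_value_Ioo (hy r.castSucc_lt_succ).le
      ((hf (crossing r).1).sub (hf (crossing r).2)).continuousOn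
      ⟨sub_neg.2 (hlt r), sub_pos.2 (hgt r)⟩
    exact ⟨x, hx, sub_eq_zero.1 hx0⟩
  choose x hx hmeet using hroot
  refine ⟨x, Fin.strictMono_iff_lt_succ.2 fun r => ?_, fun r => ?_, hmeet⟩
  · exact (hx r.castSucc).2.trans (Fin.succ_castSucc r ▸ (hx r.succ).1)
  · exact ⟨(hy.monotone (Fin.zero_le _)).trans_lt (hx r).1,
      (hx r).2.trans_le (hy.monotone (Fin.le_last _))⟩

lemma forcesBendOn_of_crossing_order {f : Fin 8 → ℝ → ℝ} (hf : ∀ a, Continuous (f a))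
    (honce : Function.Injective (f 0 - f 7)) {y : Fin 17 → ℝ} (hy : StrictMono y)
    (hlt : ∀ r : Fin 16, f (crossing r).1 (y r.castSucc) < f (crossing r).2 (y r.castSucc))
    (hgt : ∀ r : Fin 16, f (crossing r).2 (y r.succ) < f (crossing r).1 (y r.succ)) :
    ForcesBendOn f (Ioo (y 0) (y 16)) := by
  obtain ⟨x, hx, hx_mem, hmeet⟩ := exists_strictMono_crossings hf hy hlt hgt
  intro h
  by_contra! hbend
  let γ (a : Fin 8) (t : ℝ) : Plane := h !₂[t, f a t]
  have hγ (a : Fin 8) : Continuous (γ a) := by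
    have := hf a
    fun_prop
  have hγ_eq {a b : Fin 8} {s t : ℝ} (heq : γ a s = γ b t) : s = t :=
    congr($(h.injective heq) 0)
  have hstraight (a : Fin 8) : IsStraightOn (γ a) (Ioo (y 0) (y 16)) := by
    have hab : y 0 < y 16 := hy (by decide)
    have hinj : Function.Injective (γ a) := fun _ _ => hγ_eq
    obtain ⟨ℓ, hℓ, hmaps⟩ := exists_isLine_mapsTo_of_not_isBendPoint (hγ a) hinj
      (fun t => mem_image_of_mem h (by simp)) isPreconnected_Ioo (nonempty_Ioo.2 hab) (hbend a)
    exact isStraightOn_Ioo_of_mapsTo (hγ a) hinj hab hℓ hmaps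
  refine not_straight_of_crossing_order hstraight hx (fun r => isOpen_Ioo.mem_nhds (hx_mem r))
    (fun r => by simp only [γ, hmeet]) fun s t heq => honce ?_
  obtain rfl := hγ_eq heq
  have hst : f 0 s = f 7 s := congr($(h.injective heq) 1)
  have h₁ : f 0 (x 1) = f 7 (x 1) := hmeet 1
  simp [hst, h₁]

lemma card_le_sum_ncard_isBendPoint {ι κ T : Type*} [Fintype ι] [Fintype T] {F : ι → ℝ → ℝ}
    {idx : T → κ → ι} {I : T → Set ℝ} (hforce : ∀ t, ForcesBendOn (fun a => F (idx t a)) (I t))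
    (hsep : ∀ t t' a a', idx t a = idx t' a' → (I t ∩ I t').Nonempty → t = t')
    {h : Plane ≃ₜ Plane} (hpoly : ∀ i, IsPolygonal (h '' planeGraph (F i))) :
    Fintype.card T ≤ ∑ i, {p | IsBendPoint (h '' planeGraph (F i)) p}.ncard := by
  choose a x hx hbend using fun t => hforce t h
  let bend (t : T) : Σ i, {p | IsBendPoint (h '' planeGraph (F i)) p} :=
    ⟨idx t (a t), h !₂[x t, F (idx t (a t)) (x t)], hbend t⟩
  have hbend_inj : Function.Injective bend := by
    intro t t' heq
    have hpoint : h !₂[x t, F (idx t (a t)) (x t)] = h !₂[x t', F (idx t' (a t')) (x t')] :=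
      congr(($heq).2.1)
    have hxx : x t = x t' := congr($(h.injective hpoint) 0)
    exact hsep t t' (a t) (a t') congr(($heq).1) ⟨x t, hx t, hxx ▸ hx t'⟩
  have (i : ι) : Finite {p | IsBendPoint (h '' planeGraph (F i)) p} :=
    (hpoly i).finite_setOf_isBendPoint
  calc Fintype.card T = Nat.card T := Fintype.card_eq_nat_card
    _ ≤ Nat.card (Σ i, {p | IsBendPoint (h '' planeGraph (F i)) p}) :=
        Nat.card_le_card_of_injective bend hbend_inj
    _ = ∑ i, {p | IsBendPoint (h '' planeGraph (F i)) p}.ncard := Nat.card_sigma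

/-! ### A tiling by forcing cells -/

/-- The negatives of the mean slopes of the functions `cellHeight`. Together with `cellOffset` and
`cellKink` they come from a computer search for eight functions that cross in the order of
`crossing` and whose kinks are small compared with their slope differences. -/
def cellSteepness : Fin 8 → ℕ := ![0, 6, 7, 27, 31, 13, 16, 2]

/-- The values at `0` of the functions `cellHeight`. -/
def cellOffset : Fin 8 → ℤ := ![92, 13, 25, -116, 15, 74, -37, 14]

/-- Half the changes of slope at `0` of the functions `cellHeight`. -/
def cellKink : Fin 8 → ℤ := ![-3, 1, 1, 5, 3, -4, -3, -2]

/-- Eight functions with one kink each that cross in the order of `crossing`. They are needed only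
at the integers `cellSample`, where the crossing order can be checked by computation. -/
def cellHeight (a : Fin 8) (x : ℤ) : ℤ := -cellSteepness a * x + cellKink a * |x| + cellOffset a

/-- Abscissae that separate consecutive crossings of the functions `cellHeight`. -/
def cellSample : Fin 17 → ℤ :=
  ![-28, -27, -25, -8, -7, -6, -5, -4, -3, -2, -1, 0, 1, 5, 6, 13, 22]

lemma strictMono_cellSample : StrictMono cellSample := by
  rw [Fin.strictMono_iff_lt_succ]; decide

lemma abs_cellSample_le : ∀ r, |cellSample r| ≤ 32 := by decide

lemma cellHeight_lt_before_crossing : ∀ r : Fin 16,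
    cellHeight (crossing r).1 (cellSample r.castSucc) <
      cellHeight (crossing r).2 (cellSample r.castSucc) := by
  decide

lemma cellHeight_lt_after_crossing : ∀ r : Fin 16,
    cellHeight (crossing r).2 (cellSample r.succ) <
      cellHeight (crossing r).1 (cellSample r.succ) := by
  decide

lemma abs_cellKink_sub_add_one_le :
    ∀ a b, a ≠ b → |cellKink a - cellKink b| + 1 ≤ |(cellSteepness a : ℤ) - cellSteepness b| := by
  decide

/-- The triangle wave of period `T`: the distance to the nearest multiple of `T`. -/
noncomputable def triangleWave (T x : ℝ) : ℝ := ‖(x : AddCircle T)‖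

lemma lipschitzWith_triangleWave (T : ℝ) : LipschitzWith 1 (triangleWave T) := by
  refine LipschitzWith.of_dist_le_mul fun x y => ?_
  calc |triangleWave T x - triangleWave T y| ≤ ‖(x : AddCircle T) - y‖ := abs_norm_sub_norm_le _ _
    _ ≤ ‖x - y‖ := QuotientAddGroup.norm_mk_le_norm
    _ = (1 : NNReal) * dist x y := by rw [NNReal.coe_one, one_mul, dist_eq_norm]

lemma triangleWave_mul_add {T : ℝ} (hT : T ≠ 0) (i : ℕ) {t : ℝ} (ht : |t| ≤ |T| / 2) :
    triangleWave T (T * i + t) = |t| := by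
  have hperiod : ((T * i + t : ℝ) : AddCircle T) = t := by
    rw [AddCircle.coe_add, mul_comm, ← nsmul_eq_mul, AddCircle.coe_nsmul, AddCircle.coe_period,
      smul_zero, zero_add]
  rw [triangleWave, hperiod]
  exact (AddCircle.norm_coe_eq_abs_iff T hT).2 ht

/-- The difference of slope between consecutive translates in `tilingCurve N`. The factors
`1985 N` and `64 N` bound the number of translates and the width of the tiling, so that the tilt
moves no curve by more than `1 / 4`, see `abs_tilt_mul_mul_le`. -/
noncomputable def tilt (N : ℕ) : ℝ := 1 / (4 * (1985 * N) * (64 * N))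

lemma tilt_pos {N : ℕ} (hN : 0 < N) : 0 < tilt N := by
  unfold tilt; positivity

lemma abs_tilt_mul_mul_le (N : ℕ) {b x : ℝ} (hb : |b| ≤ 1985 * N) (hx : |x| ≤ 64 * N) :
    |tilt N * b * x| ≤ 1 / 4 := by
  rcases N.eq_zero_or_pos with rfl | hN
  · simp [tilt]
  calc |tilt N * b * x| = tilt N * (|b| * |x|) := by
        rw [abs_mul, abs_mul, abs_of_pos (tilt_pos hN), mul_assoc]
    _ ≤ tilt N * (1985 * N * (64 * N)) := by have := (tilt_pos hN).le; gcongr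
    _ = 1 / 4 := by unfold tilt; field_simp

/-- For `p = (a, b)`, the periodic extension of `cellHeight a` (up to an affine term), shifted up by
`b` and tilted so that different shifts of the same curve cross. -/
noncomputable def tilingCurve (N : ℕ) (p : Fin 8 × Fin (1985 * N)) (x : ℝ) : ℝ :=
  -(cellSteepness p.1 + tilt N * p.2) * x + cellKink p.1 * triangleWave 64 x +
    (cellOffset p.1 + p.2)

lemma transverse_tilingCurve (N : ℕ) : Transverse (tilingCurve N) := by
  refine (transverse_mul_add_mul (lipschitzWith_triangleWave 64) ?_).add_const _
  rintro ⟨a, b⟩ ⟨a', b'⟩ hne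
  have hN : 0 < N := by have := b.pos; omega
  rcases eq_or_ne a a' with rfl | ha
  · have hb : (b : ℝ) ≠ b' := by
      intro h
      exact hne (by rw [Fin.ext (Nat.cast_injective h)])
    have htilt : tilt N * b ≠ tilt N * b' := (mul_right_injective₀ (tilt_pos hN).ne').ne hb
    rw [sub_self, abs_zero, abs_pos]
    intro h
    apply htilt
    linarith
  · have hsep : |(cellKink a - cellKink a' : ℝ)| + 1 ≤ |(cellSteepness a - cellSteepness a' : ℝ)| :=
      mod_cast abs_cellKink_sub_add_one_le a a' ha
    have htilt : |tilt N * (b' - b : ℝ) * 1| ≤ 1 / 4 := by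
      have hb : (b : ℝ) ≤ 1985 * N := mod_cast b.2.le
      have hb' : (b' : ℝ) ≤ 1985 * N := mod_cast b'.2.le
      have hN' : (1 : ℝ) ≤ N := mod_cast hN
      refine abs_tilt_mul_mul_le N
        (abs_sub_le_of_nonneg_of_le (by positivity) hb' (by positivity) hb) ?_
      rw [abs_one]
      linarith
    calc |(cellKink a - cellKink a' : ℝ)|
        < |(cellSteepness a - cellSteepness a' : ℝ)| - |tilt N * (b' - b : ℝ) * 1| := by linarith
      _ ≤ |(cellSteepness a - cellSteepness a' : ℝ) - tilt N * (b' - b) * 1| :=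
          abs_sub_abs_le_abs_sub _ _
      _ = _ := by rw [← abs_neg]; congr 1; ring

/-- The curve that plays the role of `cellHeight a` in the cell with column `t.1` and height `t.2`.
Over the `64 t.1` preceding units it has descended by `cellSteepness a * (64 * t.1)`, and
`1985 = 1 + 31 * 64` levels per column are enough since no steepness exceeds `31`. -/
def cellIndex {N : ℕ} (t : Fin N × Fin N) (a : Fin 8) : Fin 8 × Fin (1985 * N) :=
  (a, ⟨t.2 + cellSteepness a * (64 * t.1), by
    have hsteep : cellSteepness a ≤ 31 := by revert a; decide
    have := Nat.mul_le_mul_right (64 * t.1) hsteep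
    omega⟩)

/-- The abscissae spanned by the cell `t`, which depend on its column only. -/
def cellInterval {N : ℕ} (t : Fin N × Fin N) : Set ℝ :=
  Ioo (64 * t.1 + cellSample 0) (64 * t.1 + cellSample 16)

lemma abs_tilingCurve_cellIndex_sub_le {N : ℕ} (t : Fin N × Fin N) (a : Fin 8) {s : ℤ}
    (hs : |s| ≤ 32) :
    |tilingCurve N (cellIndex t a) (64 * t.1 + s) - (t.2 + cellHeight a s)| ≤ 1 / 4 := by
  have hs' : |(s : ℝ)| ≤ 32 := mod_cast hs
  obtain ⟨hlo, hhi⟩ := abs_le.1 hs'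
  have hcol : (t.1 + 1 : ℝ) ≤ N := mod_cast t.1.2
  have hcol₀ : (0 : ℝ) ≤ t.1 := Nat.cast_nonneg _
  have hlevel : ((cellIndex t a).2 : ℝ) ≤ 1985 * N := mod_cast (cellIndex t a).2.2.le
  have htilt : |tilt N * (-(cellIndex t a).2) * (64 * t.1 + s)| ≤ 1 / 4 :=
    abs_tilt_mul_mul_le N (by rwa [abs_neg, Nat.abs_cast])
      (abs_le.2 ⟨by linarith [hcol₀], by linarith⟩)
  have hwave : triangleWave 64 (64 * t.1 + s) = |(s : ℝ)| :=
    triangleWave_mul_add (by norm_num) t.1 (by norm_num [hs'])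
  convert htilt using 2
  simp only [tilingCurve, hwave, cellIndex, cellHeight]
  push_cast
  ring

lemma forcesBendOn_cell {N : ℕ} {k : Fin 8 × Fin (1985 * N) → ℝ} (hk : ∀ p, |k p| < 1 / 4)
    (t : Fin N × Fin N) :
    ForcesBendOn (fun a x => tilingCurve N (cellIndex t a) x + k (cellIndex t a))
      (cellInterval t) := by
  have hcell : Function.Injective (cellIndex t) := fun a b h => congr(($h).1)
  have hf := ((transverse_tilingCurve N).add_const k).comp_injective hcell
  have hlt {a b : Fin 8} {r : Fin 17}
      (h : cellHeight a (cellSample r) < cellHeight b (cellSample r)) :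
      tilingCurve N (cellIndex t a) (64 * t.1 + cellSample r) + k (cellIndex t a) <
        tilingCurve N (cellIndex t b) (64 * t.1 + cellSample r) + k (cellIndex t b) := by
    have hgap : (cellHeight a (cellSample r) + 1 : ℝ) ≤ cellHeight b (cellSample r) := mod_cast h
    have ha := abs_le.1 (abs_tilingCurve_cellIndex_sub_le t a (abs_cellSample_le r))
    have hb := abs_le.1 (abs_tilingCurve_cellIndex_sub_le t b (abs_cellSample_le r))
    linarith [abs_lt.1 (hk (cellIndex t a)), abs_lt.1 (hk (cellIndex t b))]
  have hsample : StrictMono fun r => 64 * (t.1 : ℝ) + cellSample r :=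
    fun r s h => by simpa using strictMono_cellSample h
  exact forcesBendOn_of_crossing_order hf.continuous (hf.bijective_sub (by decide)).injective
    hsample (fun r => hlt (cellHeight_lt_before_crossing r))
    fun r => hlt (cellHeight_lt_after_crossing r)

lemma eq_of_cellIndex_eq {N : ℕ} {t t' : Fin N × Fin N} {a a' : Fin 8}
    (hidx : cellIndex t a = cellIndex t' a')
    (hmeet : (cellInterval t ∩ cellInterval t').Nonempty) : t = t' := by
  obtain ⟨x, ⟨hx₁, hx₂⟩, hx₁', hx₂'⟩ := hmeet
  have hwidth : cellSample 16 - cellSample 0 < 64 := by decide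
  have hle {i i' : ℕ} (h : (64 * i + cellSample 0 : ℝ) < 64 * i' + cellSample 16) : i ≤ i' := by
    have : 64 * (i : ℤ) + cellSample 0 < 64 * i' + cellSample 16 := mod_cast h
    omega
  have hcol : t.1 = t'.1 := Fin.ext (le_antisymm (hle (hx₁.trans hx₂')) (hle (hx₁'.trans hx₂)))
  obtain rfl : a = a' := congr(($hidx).1)
  have hlevel : (t.2 : ℕ) + cellSteepness a * (64 * t.1) = t'.2 + cellSteepness a * (64 * t'.1) :=
    congr((($hidx).2 : ℕ))
  rw [hcol] at hlevel
  exact Prod.ext hcol (Fin.ext (Nat.add_right_cancel hlevel))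

lemma exists_arrangement_sq_le_sum_ncard_isBendPoint (N : ℕ) :
    ∃ L : Fin (8 * (1985 * N)) → Set Plane, IsArrangement L ∧ IsSimple L ∧
      ∀ h : Plane ≃ₜ Plane, (∀ i, IsPolygonal (h '' L i)) →
        N ^ 2 ≤ ∑ i, {p | IsBendPoint (h '' L i) p}.ncard := by
  let e : Fin 8 × Fin (1985 * N) ≃ Fin (8 * (1985 * N)) := finProdFinEquiv
  have hf : Transverse fun i => tilingCurve N (e.symm i) :=
    (transverse_tilingCurve N).comp_injective e.symm.injective
  obtain ⟨k, hk, hsimple⟩ := hf.exists_offsets_card_le_two (by norm_num : (0 : ℝ) < 1 / 4)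
    Finset.univ
  refine ⟨fun i => planeGraph fun x => tilingCurve N (e.symm i) x + k i,
    (hf.add_const k).isArrangement, isSimple_planeGraph_of_card_le_two hsimple, fun h hpoly => ?_⟩
  have hforce (t : Fin N × Fin N) := forcesBendOn_cell (k := k ∘ e) (fun p => hk (e p)) t
  calc N ^ 2 = Fintype.card (Fin N × Fin N) := by simp [sq]
    _ ≤ _ := card_le_sum_ncard_isBendPoint (idx := fun t a => e (cellIndex t a))
      (by simpa using hforce) (fun t t' a a' hidx => eq_of_cellIndex_eq (e.injective hidx)) hpoly

/-- There exist simple arrangements of `n` pseudolines whose every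
representation by polygonal chains has `Ω(n²)` bends in total. -/
theorem exists_arrangement_requiring_quadratic_total_bends :
    ∃ c : ℝ, 0 < c ∧
      {n : ℕ | ∃ L : Fin n → Set Plane,
        IsArrangement L ∧ IsSimple L ∧
        ∀ h : Plane ≃ₜ Plane,
          (∀ i, IsPolygonal (h '' L i)) →
          c * (n : ℝ) ^ 2 ≤
            ∑ i : Fin n, ({p | IsBendPoint (h '' L i) p}.ncard : ℝ)}.Infinite := by
  refine ⟨1 / (8 * 1985) ^ 2, by norm_num, ?_⟩
  refine infinite_of_injective_forall_mem (f := fun N : ℕ => 8 * (1985 * N))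
    (fun M N hMN => by simpa using hMN) fun N => ?_
  obtain ⟨L, harr, hsimple, hbends⟩ := exists_arrangement_sq_le_sum_ncard_isBendPoint N
  refine ⟨L, harr, hsimple, fun h hpoly => ?_⟩
  calc 1 / (8 * 1985) ^ 2 * ((8 * (1985 * N) : ℕ) : ℝ) ^ 2 = N ^ 2 := by push_cast; ring
    _ ≤ ∑ i, ({p | IsBendPoint (h '' L i) p}.ncard : ℝ) := mod_cast hbends h hpoly
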